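/- arXiv:0707.3104 — 2 statements merged into one kernel-verified Lean document; each statement's English description precedes it below -/
import Mathlib

section
/- For every integer i ≥ 1, ν₂(S(8i+4, 5)) ≥ 2, i.e., 4 divides S(8i+4, 5). -/
/-- Stirling numbers of the second kind, via the recurrence
`S(n+1,k+1) = S(n,k) + (k+1)·S(n,k+1)`. -/
def stirling2 : ℕ → ℕ → ℕ
  | 0, 0 => 1
  | 0, _ + 1 => 0
  | _ + 1, 0 => 0
  | n + 1, k + 1 => stirling2 n k + (k + 1) * stirling2 n (k + 1)

theorem stirling2_step (n k : ℕ) :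
    stirling2 (n + 1) (k + 1) = stirling2 n k + (k + 1) * stirling2 n (k + 1) := rfl

theorem stirling2_col0 (n : ℕ) : stirling2 (n + 1) 0 = 0 := rfl

/-- The five column residues modulo 4 are constant along `n = 8 j + 12`. -/
theorem stirling2_mod_four (j : ℕ) :
    stirling2 (8 * j + 12) 1 = 1 ∧ stirling2 (8 * j + 12) 2 % 4 = 3 ∧
    stirling2 (8 * j + 12) 3 % 4 = 2 ∧ stirling2 (8 * j + 12) 4 % 4 = 1 ∧
    stirling2 (8 * j + 12) 5 % 4 = 0 := by
  induction j with
  | zero => simp [stirling2]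
  | succ j ih =>
    have step : ∀ n, stirling2 (n + 2) 1 = stirling2 (n + 1) 1 ∧
        stirling2 (n + 2) 2 = stirling2 (n + 1) 1 + 2 * stirling2 (n + 1) 2 ∧
        stirling2 (n + 2) 3 = stirling2 (n + 1) 2 + 3 * stirling2 (n + 1) 3 ∧
        stirling2 (n + 2) 4 = stirling2 (n + 1) 3 + 4 * stirling2 (n + 1) 4 ∧
        stirling2 (n + 2) 5 = stirling2 (n + 1) 4 + 5 * stirling2 (n + 1) 5 := by
      intro n
      refine ⟨?_, rfl, rfl, rfl, rfl⟩
      rw [stirling2_step (n + 1) 0, stirling2_col0]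
      simp
    have h1 := step (8 * j + 11)
    have h2 := step (8 * j + 12)
    have h3 := step (8 * j + 13)
    have h4 := step (8 * j + 14)
    have h5 := step (8 * j + 15)
    have h6 := step (8 * j + 16)
    have h7 := step (8 * j + 17)
    have h8 := step (8 * j + 18)
    rw [show 8 * (j + 1) + 12 = 8 * j + 20 by ring]
    simp only [Nat.add_assoc, Nat.reduceAdd] at h1 h2 h3 h4 h5 h6 h7 h8
    omega

theorem stirling2_pos_of_le (n : ℕ) : ∀ k, k ≤ n → 1 ≤ k → 0 < stirling2 n k := by
  induction n with
  | zero => intro k h1 h2; omega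
  | succ n ih =>
    intro k h1 h2
    obtain ⟨k, rfl⟩ : ∃ m, k = m + 1 := ⟨k - 1, by omega⟩
    rw [stirling2_step]
    rcases Nat.eq_zero_or_pos k with rfl | hk
    · rcases Nat.eq_zero_or_pos n with rfl | hn
      · simp [stirling2]
      · have := ih 1 hn le_rfl
        simp only [zero_add]
        omega
    · have := ih k (by omega) hk
      omega

/-- For i ≥ 1, ν₂(S(8i+4,5)) ≥ 2. -/
theorem nu2_stirling_five_8i4 (i : ℕ) (hi : 1 ≤ i) :
    2 ≤ padicValNat 2 (stirling2 (8 * i + 4) 5) := by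
  obtain ⟨j, rfl⟩ : ∃ j, i = j + 1 := ⟨i - 1, by omega⟩
  have h := (stirling2_mod_four j).2.2.2.2
  have hp := stirling2_pos_of_le (8 * (j + 1) + 4) 5 (by omega) (by omega)
  have e : 8 * (j + 1) + 4 = 8 * j + 12 := by ring
  rw [e] at hp ⊢
  rw [← padicValNat_dvd_iff_le hp.ne']
  exact Nat.dvd_of_mod_eq_zero h
end

section
/- Let m ≥ 1 and N be integers with N ≥ m + 2, and set M = 2^m − 1. Then ν₂( Σ_{j=0}^{M} 5^{M−j} · S(N + j, 4) ) = m − 1. -/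
lemma st1 (n : ℕ) : stirling2 (n + 1) 1 = 1 := by
  induction n with
  | zero => simp [stirling2]
  | succ n ih => rw [stirling2, ih]; simp [stirling2]

lemma st2 (n : ℕ) : (2 * stirling2 (n + 1) 2 : ℤ) = 2 ^ (n + 1) - 2 := by
  induction n with
  | zero => simp [stirling2]
  | succ n ih =>
    rw [stirling2, st1]; push_cast; rw [pow_succ]; linarith

lemma st3 (n : ℕ) : (6 * stirling2 (n + 1) 3 : ℤ) = 3 ^ (n + 1) - 3 * 2 ^ (n + 1) + 3 := by
  induction n with
  | zero => simp [stirling2]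
  | succ n ih =>
    have h := st2 n
    rw [stirling2]; push_cast; rw [pow_succ, pow_succ 2 (n + 1)]; linarith

lemma st4 (n : ℕ) : (24 * stirling2 (n + 1) 4 : ℤ) =
    4 ^ (n + 1) - 4 * 3 ^ (n + 1) + 6 * 2 ^ (n + 1) - 4 := by
  induction n with
  | zero => simp [stirling2]
  | succ n ih =>
    have h := st3 n
    rw [stirling2]; push_cast
    rw [pow_succ, pow_succ 2 (n + 1), pow_succ 3 (n + 1)]; linarith

lemma sum_formula (N k : ℕ) (hN : 1 ≤ N) :
    (24 * ((∑ j ∈ Finset.range (k + 1), 5 ^ (k - j) * stirling2 (N + j) 4 : ℕ) : ℤ)) =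
    4 ^ N * (5 ^ (k + 1) - 4 ^ (k + 1)) - 2 * 3 ^ N * (5 ^ (k + 1) - 3 ^ (k + 1))
      + 2 * 2 ^ N * (5 ^ (k + 1) - 2 ^ (k + 1)) - (5 ^ (k + 1) - 1) := by
  obtain ⟨n, rfl⟩ : ∃ n, N = n + 1 := ⟨N - 1, by omega⟩
  induction k with
  | zero => simp [st4]; ring
  | succ k ih =>
    have e : ∑ j ∈ Finset.range (k + 1 + 1), 5 ^ (k + 1 - j) * stirling2 (n + 1 + j) 4 =
        5 * (∑ j ∈ Finset.range (k + 1), 5 ^ (k - j) * stirling2 (n + 1 + j) 4)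
          + stirling2 (n + 1 + (k + 1)) 4 := by
      rw [Finset.sum_range_succ, Finset.mul_sum]
      congr 1
      · apply Finset.sum_congr rfl
        intro j hj
        have : j ≤ k := by simpa [Nat.lt_succ_iff] using hj
        rw [show k + 1 - j = (k - j) + 1 by omega]; ring
      · simp
    have h := st4 (n + 1 + k)
    rw [e, Nat.cast_add, Nat.cast_mul, show n + 1 + (k + 1) = n + 1 + k + 1 by ring]
    push_cast at ih h ⊢
    rw [mul_add, h, mul_left_comm, ih]
    ring

lemma five_pow (m : ℕ) : ∃ u : ℤ, (5 : ℤ) ^ (2 ^ m) = 1 + 4 * 2 ^ m * (2 * u + 1) := by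
  induction m with
  | zero => exact ⟨0, by norm_num⟩
  | succ m ih =>
    obtain ⟨u, hu⟩ := ih
    exact ⟨u + 2 ^ m * (2 * u + 1) ^ 2, by rw [pow_succ 2 m, pow_mul, hu]; ring⟩

lemma five_three (p : ℕ) : ∃ v : ℤ, (5 : ℤ) ^ (2 ^ (p + 1)) = 3 ^ (2 ^ (p + 1)) + 16 * 2 ^ p * v := by
  induction p with
  | zero => exact ⟨1, by norm_num⟩
  | succ m ih =>
    obtain ⟨u, hu⟩ := ih
    exact ⟨u * 3 ^ (2 ^ (m + 1)) + 8 * 2 ^ m * u ^ 2, by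
      rw [pow_succ 2 (m + 1), pow_mul, pow_mul, hu]; ring⟩

theorem nu2_sum_stirling_four (m N M : ℕ) (hm : 1 ≤ m) (hN : m + 2 ≤ N)
    (hM : M = 2 ^ m - 1) :
    padicValNat 2 (∑ j ∈ Finset.range (M + 1), 5 ^ (M - j) * stirling2 (N + j) 4) =
      m - 1 := by
  have h := sum_formula N M (by omega)
  generalize (∑ j ∈ Finset.range (M + 1), 5 ^ (M - j) * stirling2 (N + j) 4) = T at h ⊢
  have hM1 : M + 1 = 2 ^ m := by have := Nat.one_le_two_pow (n := m); omega
  rw [hM1] at h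
  obtain ⟨p, rfl⟩ : ∃ p, m = p + 1 := ⟨m - 1, by omega⟩
  obtain ⟨d, rfl⟩ : ∃ d, N = p + 3 + d := ⟨N - (p + 3), by omega⟩
  obtain ⟨u, hu⟩ := five_pow (p + 1)
  obtain ⟨v, hv⟩ := five_three p
  have h3 : ∃ w : ℤ, (3 * T : ℤ) = 2 ^ p * (2 * w + 1) := by
    refine ⟨4 * 2 ^ p * 4 ^ d * (5 ^ 2 ^ (p + 1) - 4 ^ 2 ^ (p + 1)) - 2 * 3 ^ (p + 3 + d) * v
      + 2 ^ d * (5 ^ 2 ^ (p + 1) - 2 ^ 2 ^ (p + 1)) - u - 1, ?_⟩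
    have e3 : (5 : ℤ) ^ 2 ^ (p + 1) - 3 ^ 2 ^ (p + 1) = 16 * 2 ^ p * v := by linarith
    have e1 : (5 : ℤ) ^ 2 ^ (p + 1) - 1 = 4 * 2 ^ (p + 1) * (2 * u + 1) := by linarith
    rw [e3, e1] at h
    generalize (5 : ℤ) ^ 2 ^ (p + 1) - 4 ^ 2 ^ (p + 1) = A at h ⊢
    generalize (5 : ℤ) ^ 2 ^ (p + 1) - 2 ^ 2 ^ (p + 1) = B at h ⊢
    have e4 : (4 : ℤ) ^ (p + 3 + d) = 64 * 2 ^ p * 2 ^ p * 4 ^ d := by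
      rw [pow_add, pow_add, show (4 : ℤ) ^ p = 2 ^ p * 2 ^ p by rw [← mul_pow]; norm_num]; ring
    have e2 : (2 : ℤ) ^ (p + 3 + d) = 8 * 2 ^ p * 2 ^ d := by ring
    rw [e4, e2, pow_succ 2 p] at h
    apply mul_left_cancel₀ (show (8 : ℤ) ≠ 0 by norm_num)
    linear_combination h
  obtain ⟨w, hw⟩ := h3
  have hd : 2 ^ p ∣ T := by
    have : ((2 ^ p : ℕ) : ℤ) ∣ ((3 * T : ℕ) : ℤ) := ⟨2 * w + 1, by push_cast; exact hw⟩
    rw [Int.natCast_dvd_natCast] at this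
    exact (Nat.Coprime.pow_left p (by norm_num)).dvd_of_dvd_mul_left this
  obtain ⟨t, rfl⟩ := hd
  have ht : (3 * t : ℤ) = 2 * w + 1 := by
    have : (2 : ℤ) ^ p ≠ 0 := by positivity
    apply mul_left_cancel₀ this
    push_cast at hw
    linarith
  have ht0 : t ≠ 0 := by omega
  rw [padicValNat.mul (by positivity) ht0, padicValNat.prime_pow,
    padicValNat.eq_zero_of_not_dvd (by omega)]
  simp
end
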